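/- arXiv:1803.03488 — 2 statements merged into one kernel-verified Lean document; each statement's English description precedes it below -/
import Mathlib

section
/- Let ε > 0 and c₁ > 0, and let k(x,ξ) = −(c₁/(4ε))·(x + ξ − 1)·Φ((c₁/(4ε))·((x − 1/2)² − (ξ − 1/2)²)). Then there exist positive constants m₁ and m₂ such that for every continuously differentiable function v : [0,1] → ℝ, the function w : [0,1] → ℝ defined by the bilateral backstepping transformation w(x) = v(x) − ∫_{1−x}^{x} k(x,ξ)·v(ξ) dξ is continuously differentiable and satisfies both ‖w‖_{H¹} ≤ m₁·‖v‖_{H¹} and ‖v‖_{H¹} ≤ m₂·‖w‖_{H¹}. -/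
/-!
Only the `C¹` regularity of the kernel matters: the equivalence holds for every bilateral
Volterra operator `v ↦ v - ∫_{1-x}^x k(x,ξ) v(ξ) dξ` with `k` continuously differentiable.

By the Leibniz rule the integral term `D` is `C¹`, and on `[0,1]` both `|D|` and `|D'|` are at most
`3 M sup |v|`, where `M` bounds `|k|` and `|∂ₓk|` on the unit square (`hasDerivAt_bilateral`,
`abs_bilateral_deriv_le`).  Since `w` and `v` differ by `D`, each `H¹` norm is controlled by the
other one plus a multiple of `sup |v|` (`H1norm_le_of_close`).  It remains to bound `sup |v|` by
either norm.  In terms of `v` this is the Sobolev inequality on `[0,1]` (`abs_le_H1norm`).  In terms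
of `w`, one applies the Sobolev inequality to `w` and then Grönwall's inequality to
`G(t) = ∫_{1/2-t}^{1/2+t} |v|`, which satisfies `G' ≤ 2 sup |w| + 2 M G` (`abs_le_of_bilateral`).
Thus the explicit inverse kernel is not needed.

The kernel of the statement is smooth because `Φ` is the sum of a power series with infinite radius
of convergence (`contDiff_Phi`).
-/

noncomputable section

/-- The entire function `Φ(s) = Σ_{m=0}^∞ sᵐ/(m!·(m+1)!)`. -/
def Phi (s : ℝ) : ℝ :=
  ∑' m : ℕ, s ^ m / ((Nat.factorial m : ℝ) * (Nat.factorial (m + 1) : ℝ))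

/-- The bilateral backstepping kernel
`k(x,ξ) = −(c₁/(4ε))·(x+ξ−1)·Φ((c₁/(4ε))((x−1/2)²−(ξ−1/2)²))`. -/
def kKer (ε c₁ x ξ : ℝ) : ℝ :=
  -(c₁ / (4 * ε)) * (x + ξ - 1) *
    Phi (c₁ / (4 * ε) * ((x - 1 / 2) ^ 2 - (ξ - 1 / 2) ^ 2))

open Set Filter Topology MeasureTheory intervalIntegral

/-! ### Regularity of the kernel -/

theorem contDiff_Phi : ContDiff ℝ 1 Phi := by
  let c : ℕ → ℝ := fun m => 1 / ((Nat.factorial m : ℝ) * (Nat.factorial (m + 1) : ℝ))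
  have hc : ∀ m, c m ≠ 0 := fun m => by positivity
  have hsum : Phi = (FormalMultilinearSeries.ofScalars ℝ c).sum := by
    funext s
    simp only [Phi, FormalMultilinearSeries.sum, FormalMultilinearSeries.ofScalars_apply_eq]
    refine tsum_congr fun m => ?_
    simp only [c, smul_eq_mul]
    ring
  have hr : (FormalMultilinearSeries.ofScalars ℝ c).radius = ⊤ := by
    apply FormalMultilinearSeries.ofScalars_radius_eq_top_of_tendsto ℝ c (.of_forall hc)
    refine squeeze_zero (fun n => by positivity) (fun n => ?_)
      tendsto_one_div_add_atTop_nhds_zero_nat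
    have h1 : ‖c n.succ‖ / ‖c n‖ = 1 / (((n : ℝ) + 1) * ((n : ℝ) + 2)) := by
      have h0 : ∀ m, 0 < c m := fun m => by positivity
      rw [Real.norm_of_nonneg (h0 _).le, Real.norm_of_nonneg (h0 _).le]
      simp only [c, Nat.succ_eq_add_one, Nat.factorial_succ]
      push_cast
      have := Nat.factorial_pos n
      field_simp
      ring
    rw [h1]
    apply one_div_le_one_div_of_le (by positivity)
    nlinarith [(Nat.cast_nonneg n : (0 : ℝ) ≤ n)]
  have hf := (FormalMultilinearSeries.ofScalars ℝ c).hasFPowerSeriesOnBall (by simp [hr])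
  rw [hr] at hf
  rw [hsum, contDiff_iff_contDiffAt]
  intro s
  exact (hf.analyticAt_of_mem (by simp)).contDiffAt

theorem contDiff_kKer (ε c₁ : ℝ) : ContDiff ℝ 1 (Function.uncurry (kKer ε c₁)) := by
  have h := contDiff_Phi
  have : Function.uncurry (kKer ε c₁) = fun p : ℝ × ℝ => -(c₁ / (4 * ε)) * (p.1 + p.2 - 1) *
    Phi (c₁ / (4 * ε) * ((p.1 - 1 / 2) ^ 2 - (p.2 - 1 / 2) ^ 2)) := rfl
  rw [this]
  refine ContDiff.mul (by fun_prop) (h.comp (by fun_prop))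

/-! ### The bilateral integral operator -/

/-- The bilateral integral `∫_{1-x}^x k(x,ξ) v(ξ) dξ` (oriented, hence signed for `x < 1/2`). -/
def bilat (k : ℝ → ℝ → ℝ) (v : ℝ → ℝ) (x : ℝ) : ℝ := ∫ ξ in (1 - x)..x, k x ξ * v ξ

/-- The integral of `f x` up to a variable endpoint is jointly differentiable, since its partial
derivatives `∫₀^y ∂ₓf` and `f` are jointly continuous. -/
theorem hasFDerivAt_primitive {f f₁ : ℝ → ℝ → ℝ} (hf : Continuous (Function.uncurry f))
    (hf₁ : Continuous (Function.uncurry f₁)) (hd : ∀ x t, HasDerivAt (fun x => f x t) (f₁ x t) x)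
    (x y : ℝ) :
    HasFDerivAt (fun p : ℝ × ℝ => ∫ t in (0:ℝ)..p.2, f p.1 t)
      ((ContinuousLinearMap.toSpanSingleton ℝ (∫ t in (0:ℝ)..y, f₁ x t)).coprod
        (ContinuousLinearMap.toSpanSingleton ℝ (f x y))) (x, y) := by
  have hcx : ∀ x, Continuous (f x) := fun x => hf.comp (Continuous.prodMk_right x)
  have hcx₁ : ∀ x, Continuous (f₁ x) := fun x => hf₁.comp (Continuous.prodMk_right x)
  have hx : ∀ x y, HasDerivAt (fun x => ∫ t in (0:ℝ)..y, f x t) (∫ t in (0:ℝ)..y, f₁ x t) x := by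
    intro x y
    obtain ⟨C, hC⟩ := ((isCompact_closedBall x 1).prod
      (isCompact_uIcc (a := 0) (b := y))).exists_bound_of_continuousOn hf₁.continuousOn
    refine (hasDerivAt_integral_of_dominated_loc_of_deriv_le (bound := fun _ => C)
      (F' := f₁) (Metric.closedBall_mem_nhds x one_pos)
      (.of_forall fun x => (hcx x).aestronglyMeasurable) ((hcx x).intervalIntegrable _ _)
      (hcx₁ x).aestronglyMeasurable (.of_forall fun t ht z hz => ?_) (by simp)
      (.of_forall fun t _ z _ => hd z t)).2
    exact hC (z, t) ⟨hz, uIoc_subset_uIcc ht⟩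
  have hp : Continuous fun p : ℝ × ℝ => ∫ t in (0:ℝ)..p.2, f₁ p.1 t :=
    continuous_parametric_primitive_of_continuous hf₁
  have key := hasStrictFDerivAt_uncurry_coprod (𝕜 := ℝ) (u := (x, y))
    (f := fun x y => ∫ t in (0:ℝ)..y, f x t)
    (f₁ := fun x y => ContinuousLinearMap.toSpanSingleton ℝ (∫ t in (0:ℝ)..y, f₁ x t))
    (f₂ := fun x y => ContinuousLinearMap.toSpanSingleton ℝ (f x y))
    (.of_forall fun p => (hx p.1 p.2).hasFDerivAt)
    (.of_forall fun p => ((hcx p.1).integral_hasStrictDerivAt 0 p.2).hasDerivAt.hasFDerivAt)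
    (((ContinuousLinearMap.toSpanSingletonCLE (𝕜 := ℝ) (E := ℝ)).continuous.comp hp).continuousAt)
    (((ContinuousLinearMap.toSpanSingletonCLE (𝕜 := ℝ) (E := ℝ)).continuous.comp hf).continuousAt)
  exact key.hasFDerivAt

theorem hasDerivAt_bilateral {k kx : ℝ → ℝ → ℝ} (hk : Continuous (Function.uncurry k))
    (hkx : Continuous (Function.uncurry kx)) (hd : ∀ x t, HasDerivAt (fun x => k x t) (kx x t) x)
    {v : ℝ → ℝ} (hv : Continuous v) (x : ℝ) :
    HasDerivAt (bilat k v) (k x x * v x + k x (1 - x) * v (1 - x) + bilat kx v x) x := by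
  have hf : Continuous (Function.uncurry fun x t => k x t * v t) :=
    hk.mul (hv.comp continuous_snd)
  have hf₁ : Continuous (Function.uncurry fun x t => kx x t * v t) :=
    hkx.mul (hv.comp continuous_snd)
  have hi : ∀ x a b, IntervalIntegrable (fun t => k x t * v t) volume a b := fun x a b =>
    (hf.comp (Continuous.prodMk_right x)).intervalIntegrable a b
  have hi₁ : ∀ x a b, IntervalIntegrable (fun t => kx x t * v t) volume a b := fun x a b =>
    (hf₁.comp (Continuous.prodMk_right x)).intervalIntegrable a b
  have hF := hasFDerivAt_primitive hf hf₁ (fun x t => (hd x t).mul_const (v t))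
  have h1 := (hF x x).comp_hasDerivAt (f := fun y : ℝ => (y, y)) x
    ((hasDerivAt_id' x).prodMk (hasDerivAt_id' x))
  have h2 := (hF x (1 - x)).comp_hasDerivAt (f := fun y : ℝ => (y, 1 - y)) x
    ((hasDerivAt_id' x).prodMk ((hasDerivAt_id' x).const_sub 1))
  have h := h1.sub h2
  have e : bilat k v = fun x => (∫ t in (0:ℝ)..x, k x t * v t)
      - ∫ t in (0:ℝ)..(1 - x), k x t * v t := by
    funext x
    exact (integral_interval_sub_left (hi x _ _) (hi x _ _)).symm
  rw [e]
  refine h.congr_deriv ?_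
  rw [bilat, ← integral_interval_sub_left (hi₁ x 0 x) (hi₁ x 0 (1 - x))]
  simp
  ring

theorem continuous_bilateral {k : ℝ → ℝ → ℝ} (hk : Continuous (Function.uncurry k))
    {v : ℝ → ℝ} (hv : Continuous v) : Continuous (bilat k v) := by
  have hf : Continuous (Function.uncurry fun x t => k x t * v t) :=
    hk.mul (hv.comp continuous_snd)
  have hi : ∀ x a b, IntervalIntegrable (fun t => k x t * v t) volume a b := fun x a b =>
    (hf.comp (Continuous.prodMk_right x)).intervalIntegrable a b
  have e : bilat k v = fun x => (∫ t in (0:ℝ)..x, k x t * v t)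
      - ∫ t in (0:ℝ)..(1 - x), k x t * v t := by
    funext x
    exact (integral_interval_sub_left (hi x _ _) (hi x _ _)).symm
  rw [e]
  exact (continuous_parametric_intervalIntegral_of_continuous hf continuous_id).sub
    (continuous_parametric_intervalIntegral_of_continuous hf (by fun_prop))

theorem uIcc_bilateral_subset {x : ℝ} (hx : x ∈ Icc (0:ℝ) 1) : uIcc (1 - x) x ⊆ Icc (0:ℝ) 1 :=
  uIcc_subset_Icc ⟨by linarith [hx.2], by linarith [hx.1]⟩ hx

theorem abs_bilateral_le {k : ℝ → ℝ → ℝ} {M : ℝ}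
    (hM : ∀ x ∈ Icc (0:ℝ) 1, ∀ t ∈ Icc (0:ℝ) 1, |k x t| ≤ M) {v : ℝ → ℝ} {S : ℝ}
    (hS : ∀ t ∈ Icc (0:ℝ) 1, |v t| ≤ S) {x : ℝ} (hx : x ∈ Icc (0:ℝ) 1) :
    |bilat k v x| ≤ M * S := by
  have hM0 : 0 ≤ M := (abs_nonneg _).trans (hM x hx x hx)
  have hS0 : 0 ≤ S := (abs_nonneg _).trans (hS x hx)
  have h := norm_integral_le_of_norm_le_const (a := 1 - x) (b := x)
    (f := fun ξ => k x ξ * v ξ) (C := M * S) (fun t ht => by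
      have ht' := uIcc_bilateral_subset hx (uIoc_subset_uIcc ht)
      rw [norm_mul]
      exact mul_le_mul (hM x hx t ht') (hS t ht') (norm_nonneg _) hM0)
  have h1 : |x - (1 - x)| ≤ 1 := abs_le.2 ⟨by linarith [hx.1], by linarith [hx.2]⟩
  exact h.trans (mul_le_of_le_one_right (by positivity) h1)

theorem abs_bilateral_deriv_le {k kx : ℝ → ℝ → ℝ} {M : ℝ}
    (hM : ∀ x ∈ Icc (0:ℝ) 1, ∀ t ∈ Icc (0:ℝ) 1, |k x t| ≤ M)
    (hMx : ∀ x ∈ Icc (0:ℝ) 1, ∀ t ∈ Icc (0:ℝ) 1, |kx x t| ≤ M) {v : ℝ → ℝ} {S : ℝ}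
    (hS : ∀ t ∈ Icc (0:ℝ) 1, |v t| ≤ S) {x : ℝ} (hx : x ∈ Icc (0:ℝ) 1) :
    |k x x * v x + k x (1 - x) * v (1 - x) + bilat kx v x| ≤ 3 * (M * S) := by
  have hM0 : 0 ≤ M := (abs_nonneg _).trans (hM x hx x hx)
  have hx' : 1 - x ∈ Icc (0:ℝ) 1 := uIcc_bilateral_subset hx left_mem_uIcc
  have h1 : |k x x * v x| ≤ M * S := by
    rw [abs_mul]; exact mul_le_mul (hM x hx x hx) (hS x hx) (abs_nonneg _) hM0
  have h2 : |k x (1 - x) * v (1 - x)| ≤ M * S := by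
    rw [abs_mul]; exact mul_le_mul (hM x hx _ hx') (hS _ hx') (abs_nonneg _) hM0
  have h3 := abs_bilateral_le hMx hS hx
  have h4 := abs_add_three (k x x * v x) (k x (1 - x) * v (1 - x)) (bilat kx v x)
  linarith

/-- Grönwall bound for the bilateral Volterra equation: `sup |v|` over `[0,1]` is controlled by
`sup |v - ∫_{1-x}^x k v|`. -/
theorem abs_le_of_bilateral {k : ℝ → ℝ → ℝ} {M : ℝ} (hM0 : 0 < M)
    (hM : ∀ x ∈ Icc (0:ℝ) 1, ∀ t ∈ Icc (0:ℝ) 1, |k x t| ≤ M) {v : ℝ → ℝ} (hv : Continuous v)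
    {A : ℝ} (hA : ∀ x ∈ Icc (0:ℝ) 1, |v x - bilat k v x| ≤ A) :
    ∀ x ∈ Icc (0:ℝ) 1, |v x| ≤ A * (1 + Real.exp M) := by
  have hA0 : 0 ≤ A := (abs_nonneg _).trans (hA 0 (by simp))
  have hva : Continuous fun x => |v x| := hv.abs
  let G : ℝ → ℝ := fun t => ∫ ξ in (1 / 2 - t)..(1 / 2 + t), |v ξ|
  have hG0 : ∀ t, 0 ≤ t → 0 ≤ G t := fun t ht =>
    integral_nonneg (by linarith) (fun _ _ => abs_nonneg _)
  -- The integral over `[1-x, x]` only involves `|v|` on the interval around `1/2` of radius `t`.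
  have hplus : ∀ t ∈ Icc (0:ℝ) (1 / 2), |v (1 / 2 + t)| ≤ A + M * G t := by
    intro t ht
    have hx : 1 / 2 + t ∈ Icc (0:ℝ) 1 := ⟨by linarith [ht.1], by linarith [ht.2]⟩
    have hb : |bilat k v (1 / 2 + t)| ≤ M * G t := by
      rw [bilat, show (1:ℝ) - (1 / 2 + t) = 1 / 2 - t by ring]
      rw [← intervalIntegral.integral_const_mul, ← Real.norm_eq_abs]
      refine norm_integral_le_of_norm_le (a := 1 / 2 - t) (b := 1 / 2 + t) (by linarith [ht.1]) (.of_forall fun ξ hξ => ?_)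
        ((hva.const_mul M).intervalIntegrable _ _)
      rw [norm_mul]
      exact mul_le_mul_of_nonneg_right
        (hM _ hx ξ ⟨by linarith [hξ.1, ht.2], by linarith [hξ.2, ht.2]⟩) (norm_nonneg _)
    have := hA _ hx
    have h3 := abs_sub_abs_le_abs_sub (v (1 / 2 + t)) (bilat k v (1 / 2 + t))
    linarith
  have hminus : ∀ t ∈ Icc (0:ℝ) (1 / 2), |v (1 / 2 - t)| ≤ A + M * G t := by
    intro t ht
    have hx : 1 / 2 - t ∈ Icc (0:ℝ) 1 := ⟨by linarith [ht.2], by linarith [ht.1]⟩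
    have hb : |bilat k v (1 / 2 - t)| ≤ M * G t := by
      rw [bilat, show (1:ℝ) - (1 / 2 - t) = 1 / 2 + t by ring, integral_symm, abs_neg]
      rw [← intervalIntegral.integral_const_mul, ← Real.norm_eq_abs]
      refine norm_integral_le_of_norm_le (a := 1 / 2 - t) (b := 1 / 2 + t) (by linarith [ht.1]) (.of_forall fun ξ hξ => ?_)
        ((hva.const_mul M).intervalIntegrable _ _)
      rw [norm_mul]
      exact mul_le_mul_of_nonneg_right
        (hM _ hx ξ ⟨by linarith [hξ.1, ht.2], by linarith [hξ.2, ht.2]⟩) (norm_nonneg _)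
    have := hA _ hx
    have h3 := abs_sub_abs_le_abs_sub (v (1 / 2 - t)) (bilat k v (1 / 2 - t))
    linarith
  have hGd : ∀ t, HasDerivAt G (|v (1 / 2 + t)| + |v (1 / 2 - t)|) t := by
    intro t
    have hP : ∀ y, HasDerivAt (fun y => ∫ ξ in (0:ℝ)..y, |v ξ|) |v y| y := fun y =>
      (hva.integral_hasStrictDerivAt 0 y).hasDerivAt
    have h1 := (hP (1 / 2 + t)).comp t ((hasDerivAt_id t).const_add (1 / 2))
    have h2 := (hP (1 / 2 - t)).comp t ((hasDerivAt_id t).const_sub (1 / 2))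
    have e : G = fun t => (∫ ξ in (0:ℝ)..(1 / 2 + t), |v ξ|) - ∫ ξ in (0:ℝ)..(1 / 2 - t), |v ξ| := by
      funext t
      exact (integral_interval_sub_left (hva.intervalIntegrable _ _)
        (hva.intervalIntegrable _ _)).symm
    rw [e]
    refine (h1.sub h2).congr_deriv ?_
    ring
  have hgr := norm_le_gronwallBound_of_norm_deriv_right_le (f := G) (δ := 0) (K := 2 * M)
    (ε := 2 * A) (a := 0) (b := 1 / 2) (fun t _ => (hGd t).continuousAt.continuousWithinAt)
    (fun t _ => (hGd t).hasDerivWithinAt) (by simp [G]) (fun t ht => by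
      have ht' := Ico_subset_Icc_self ht
      rw [Real.norm_of_nonneg (by positivity), Real.norm_of_nonneg (hG0 t ht.1)]
      linarith [hplus t ht', hminus t ht'])
  have hGM : ∀ t ∈ Icc (0:ℝ) (1 / 2), M * G t ≤ A * Real.exp M := by
    intro t ht
    have h := (le_abs_self _).trans (hgr t ht)
    rw [gronwallBound_of_K_ne_0 (by positivity)] at h
    have h' : M * G t ≤ A * (Real.exp (2 * M * t) - 1) := by
      calc M * G t ≤ M * (0 * Real.exp (2 * M * (t - 0)) +
            2 * A / (2 * M) * (Real.exp (2 * M * (t - 0)) - 1)) :=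
            mul_le_mul_of_nonneg_left h hM0.le
        _ = A * (Real.exp (2 * M * t) - 1) := by
            rw [sub_zero]; field_simp; ring
    have he : Real.exp (2 * M * t) ≤ Real.exp M := Real.exp_le_exp.2 (by nlinarith [ht.2])
    nlinarith
  intro x hx
  rcases le_total (1 / 2) x with h | h
  · have ht : x - 1 / 2 ∈ Icc (0:ℝ) (1 / 2) := ⟨by linarith, by linarith [hx.2]⟩
    have h1 := hplus _ ht
    rw [add_sub_cancel] at h1
    linarith [hGM _ ht]
  · have ht : 1 / 2 - x ∈ Icc (0:ℝ) (1 / 2) := ⟨by linarith, by linarith [hx.1]⟩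
    have h1 := hminus _ ht
    rw [sub_sub_cancel] at h1
    linarith [hGM _ ht]

/-! ### The `H¹` norm -/

/-- The `L²` norm on `[0,1]`. -/
def L2norm (u : ℝ → ℝ) : ℝ := Real.sqrt (∫ x in (0:ℝ)..1, u x ^ 2)

/-- The norm `‖u‖_{L²} + ‖u'‖_{L²}` on `[0,1]`. -/
def H1norm (u : ℝ → ℝ) : ℝ := L2norm u + L2norm (deriv u)

theorem L2norm_nonneg (u : ℝ → ℝ) : 0 ≤ L2norm u := Real.sqrt_nonneg _

theorem L2norm_sq (u : ℝ → ℝ) : L2norm u ^ 2 = ∫ x in (0:ℝ)..1, u x ^ 2 :=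
  Real.sq_sqrt (integral_nonneg zero_le_one fun _ _ => sq_nonneg _)

theorem integral_abs_le_L2norm {u : ℝ → ℝ} (hu : Continuous u) :
    ∫ x in (0:ℝ)..1, |u x| ≤ L2norm u := by
  set c := ∫ x in (0:ℝ)..1, |u x| with hc
  -- The variance of `|u|` is nonnegative.
  have h : 0 ≤ ∫ x in (0:ℝ)..1, (|u x| - c) ^ 2 :=
    integral_nonneg zero_le_one fun _ _ => sq_nonneg _
  have e : ∫ x in (0:ℝ)..1, (|u x| - c) ^ 2 = (∫ x in (0:ℝ)..1, u x ^ 2) - 2 * c * c + c ^ 2 := by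
    have : ∀ x, (|u x| - c) ^ 2 = u x ^ 2 - 2 * c * |u x| + c ^ 2 := fun x => by
      rw [← sq_abs (u x)]; ring
    simp_rw [this]
    rw [intervalIntegral.integral_add, intervalIntegral.integral_sub,
      intervalIntegral.integral_const_mul, ← hc]
    · simp
    all_goals exact Continuous.intervalIntegrable (by fun_prop) _ _
  apply Real.le_sqrt_of_sq_le
  linarith [e ▸ h]

/-- Sobolev inequality on `[0,1]`. -/
theorem abs_le_H1norm {u : ℝ → ℝ} (hu : ContDiff ℝ 1 u) :
    ∀ x ∈ Icc (0:ℝ) 1, |u x| ≤ H1norm u := by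
  intro x hx
  have hu' : Continuous (deriv u) := hu.continuous_deriv le_rfl
  have hc := hu.continuous
  have hd : ∫ y in (0:ℝ)..1, |deriv u y| ≤ L2norm (deriv u) := integral_abs_le_L2norm hu'
  have key : ∀ y ∈ Icc (0:ℝ) 1, |u x| - L2norm (deriv u) ≤ |u y| := by
    intro y hy
    have h1 : ∫ t in y..x, deriv u t = u x - u y :=
      integral_deriv_eq_sub (fun t _ => hu.differentiable one_ne_zero t)
        (hu'.intervalIntegrable _ _)
    have h2 : |u x - u y| ≤ ∫ t in (0:ℝ)..1, |deriv u t| := by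
      rw [← h1]
      calc |∫ t in y..x, deriv u t| ≤ |(∫ t in y..x, |deriv u t|)| :=
            norm_integral_le_abs_integral_norm (f := deriv u)
        _ ≤ |(∫ t in (0:ℝ)..1, |deriv u t|)| :=
            abs_integral_mono_interval
              (by
                rw [uIoc, uIoc_of_le zero_le_one]
                exact Ioc_subset_Ioc (le_min hy.1 hx.1) (max_le hy.2 hx.2))
              (.of_forall fun _ => abs_nonneg _)
              (hu'.abs.intervalIntegrable _ _)
        _ = _ := abs_of_nonneg (integral_nonneg zero_le_one fun _ _ => abs_nonneg _)
    have h3 := abs_sub_abs_le_abs_sub (u x) (u y)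
    linarith
  have h4 : ∫ _ in (0:ℝ)..1, (|u x| - L2norm (deriv u)) ≤ ∫ y in (0:ℝ)..1, |u y| :=
    integral_mono_on zero_le_one (by simp) (hc.abs.intervalIntegrable _ _) key
  have h5 := integral_abs_le_L2norm hc
  simp only [intervalIntegral.integral_const, sub_zero, one_smul] at h4
  unfold H1norm
  linarith

theorem L2norm_le_of_close {u p : ℝ → ℝ} (hu : Continuous u) (hp : Continuous p) {C : ℝ}
    (hC : ∀ x ∈ Icc (0:ℝ) 1, |u x - p x| ≤ C) : L2norm u ≤ 2 * L2norm p + 2 * C := by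
  have hC0 : 0 ≤ C := (abs_nonneg _).trans (hC 0 (by simp))
  have h : ∫ x in (0:ℝ)..1, u x ^ 2 ≤ ∫ x in (0:ℝ)..1, (2 * p x ^ 2 + 2 * C ^ 2) := by
    refine integral_mono_on zero_le_one (Continuous.intervalIntegrable (by fun_prop) _ _)
      (Continuous.intervalIntegrable (by fun_prop) _ _) fun x hx => ?_
    have h1 : (u x - p x) ^ 2 ≤ C ^ 2 := sq_le_sq' (abs_le.1 (hC x hx)).1 (abs_le.1 (hC x hx)).2
    nlinarith [sq_nonneg (u x - 2 * p x)]
  have e : ∫ x in (0:ℝ)..1, (2 * p x ^ 2 + 2 * C ^ 2) = 2 * L2norm p ^ 2 + 2 * C ^ 2 := by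
    rw [L2norm_sq, intervalIntegral.integral_add
      (Continuous.intervalIntegrable (by fun_prop) _ _) (by simp),
      intervalIntegral.integral_const_mul]
    simp
  rw [e] at h
  refine Real.sqrt_le_iff.2 ⟨by have := L2norm_nonneg p; positivity, ?_⟩
  nlinarith [L2norm_nonneg p, mul_nonneg (L2norm_nonneg p) hC0, sq_nonneg (L2norm p), sq_nonneg C]

theorem H1norm_le_of_close {u p : ℝ → ℝ} (hu : ContDiff ℝ 1 u) (hp : ContDiff ℝ 1 p) {C : ℝ}
    (h0 : ∀ x ∈ Icc (0:ℝ) 1, |u x - p x| ≤ C)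
    (h1 : ∀ x ∈ Icc (0:ℝ) 1, |deriv u x - deriv p x| ≤ C) :
    H1norm u ≤ 2 * H1norm p + 4 * C := by
  have a := L2norm_le_of_close hu.continuous hp.continuous h0
  have b := L2norm_le_of_close (hu.continuous_deriv le_rfl) (hp.continuous_deriv le_rfl) h1
  unfold H1norm
  linarith

/-! ### The norm equivalence -/

/-- The norm equivalence for an arbitrary `C¹` kernel. -/
theorem H1_equivalence_of_contDiff {k : ℝ → ℝ → ℝ} (hk : ContDiff ℝ 1 (Function.uncurry k)) :
    ∃ m₁ > (0:ℝ), ∃ m₂ > (0:ℝ), ∀ v : ℝ → ℝ, ContDiff ℝ 1 v →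
      ContDiff ℝ 1 (fun x => v x - bilat k v x) ∧
      H1norm (fun x => v x - bilat k v x) ≤ m₁ * H1norm v ∧
      H1norm v ≤ m₂ * H1norm (fun x => v x - bilat k v x) := by
  let kx : ℝ → ℝ → ℝ := fun x t => fderiv ℝ (Function.uncurry k) (x, t) (1, 0)
  have hkc := hk.continuous
  have hkx : Continuous (Function.uncurry kx) :=
    (hk.continuous_fderiv one_ne_zero).clm_apply continuous_const
  have hd : ∀ x t, HasDerivAt (fun x => k x t) (kx x t) x := fun x t =>
    ((hk.differentiable one_ne_zero (x, t)).hasFDerivAt).comp_hasDerivAt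
      (f := fun y : ℝ => (y, t)) x ((hasDerivAt_id' x).prodMk (hasDerivAt_const x t))
  obtain ⟨M₁, hM₁⟩ := ((isCompact_Icc (a := (0:ℝ)) (b := 1)).prod
    (isCompact_Icc (a := (0:ℝ)) (b := 1))).exists_bound_of_continuousOn hkc.continuousOn
  obtain ⟨M₂, hM₂⟩ := ((isCompact_Icc (a := (0:ℝ)) (b := 1)).prod
    (isCompact_Icc (a := (0:ℝ)) (b := 1))).exists_bound_of_continuousOn hkx.continuousOn
  let M := max 1 (max M₁ M₂)
  have hM0 : 0 < M := lt_of_lt_of_le one_pos (le_max_left _ _)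
  have hM : ∀ x ∈ Icc (0:ℝ) 1, ∀ t ∈ Icc (0:ℝ) 1, |k x t| ≤ M := fun x hx t ht =>
    (hM₁ (x, t) ⟨hx, ht⟩).trans ((le_max_left _ _).trans (le_max_right _ _))
  have hMx : ∀ x ∈ Icc (0:ℝ) 1, ∀ t ∈ Icc (0:ℝ) 1, |kx x t| ≤ M := fun x hx t ht =>
    (hM₂ (x, t) ⟨hx, ht⟩).trans ((le_max_right _ _).trans (le_max_right _ _))
  refine ⟨2 + 12 * M, by positivity, 2 + 12 * M * (1 + Real.exp M), by positivity,
    fun v hv => ?_⟩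
  have hvc := hv.continuous
  have hD := hasDerivAt_bilateral hkc hkx hd hvc
  have hDc : ContDiff ℝ 1 (bilat k v) := by
    rw [contDiff_one_iff_deriv]
    refine ⟨fun x => (hD x).differentiableAt, ?_⟩
    rw [funext fun x => (hD x).deriv]
    have h1 : Continuous fun x => k x x := hkc.comp (by fun_prop : Continuous fun x : ℝ => (x, x))
    have h2 : Continuous fun x => k x (1 - x) :=
      hkc.comp (by fun_prop : Continuous fun x : ℝ => (x, 1 - x))
    exact ((h1.mul hvc).add (h2.mul (by fun_prop))).add (continuous_bilateral hkx hvc)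
  have hw : ContDiff ℝ 1 (fun x => v x - bilat k v x) := hv.sub hDc
  have hdw : ∀ x, deriv (fun x => v x - bilat k v x) x = deriv v x - deriv (bilat k v) x :=
    fun x => deriv_fun_sub (hv.differentiable one_ne_zero x) (hDc.differentiable one_ne_zero x)
  have hb : ∀ S, (∀ t ∈ Icc (0:ℝ) 1, |v t| ≤ S) → ∀ x ∈ Icc (0:ℝ) 1,
      |bilat k v x| ≤ 3 * (M * S) ∧ |deriv (bilat k v) x| ≤ 3 * (M * S) := by
    intro S hS x hx
    have hS0 : 0 ≤ S := (abs_nonneg _).trans (hS x hx)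
    have := mul_nonneg hM0.le hS0
    refine ⟨by linarith [abs_bilateral_le hM hS hx], ?_⟩
    rw [(hD x).deriv]
    exact abs_bilateral_deriv_le hM hMx hS hx
  refine ⟨hw, ?_, ?_⟩
  · have hbv := hb _ (abs_le_H1norm hv)
    have := H1norm_le_of_close hw hv (C := 3 * (M * H1norm v))
      (fun x hx => by simpa using (hbv x hx).1)
      (fun x hx => by rw [hdw]; simpa using (hbv x hx).2)
    linarith
  · have hbv := hb _ (abs_le_of_bilateral hM0 hM hvc (abs_le_H1norm hw))
    have := H1norm_le_of_close hv hw (C := 3 * (M * (H1norm (fun x => v x - bilat k v x) *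
        (1 + Real.exp M))))
      (fun x hx => by simpa using (hbv x hx).1)
      (fun x hx => by rw [hdw]; simpa using (hbv x hx).2)
    linarith

/-- The bilateral backstepping transformation
`w(x) = v(x) − ∫_{1−x}^{x} k(x,ξ) v(ξ) dξ` is an `H¹`-norm equivalence:
there are `m₁, m₂ > 0` with `‖w‖_{H¹} ≤ m₁‖v‖_{H¹}` and `‖v‖_{H¹} ≤ m₂‖w‖_{H¹}`. -/
theorem backstepping_H1_equivalence (ε c₁ : ℝ) (hε : 0 < ε) (hc₁ : 0 < c₁) :
    ∃ m₁ > (0:ℝ), ∃ m₂ > (0:ℝ),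
      ∀ v : ℝ → ℝ, ContDiff ℝ 1 v →
        ContDiff ℝ 1 (fun x => v x - ∫ ξ in (1 - x)..x, kKer ε c₁ x ξ * v ξ) ∧
        (Real.sqrt (∫ x in (0:ℝ)..1,
              (v x - ∫ ξ in (1 - x)..x, kKer ε c₁ x ξ * v ξ) ^ 2)
            + Real.sqrt (∫ x in (0:ℝ)..1,
              deriv (fun y => v y - ∫ ξ in (1 - y)..y, kKer ε c₁ y ξ * v ξ) x ^ 2)) ≤
          m₁ * (Real.sqrt (∫ x in (0:ℝ)..1, v x ^ 2)
            + Real.sqrt (∫ x in (0:ℝ)..1, deriv v x ^ 2)) ∧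
        (Real.sqrt (∫ x in (0:ℝ)..1, v x ^ 2)
            + Real.sqrt (∫ x in (0:ℝ)..1, deriv v x ^ 2)) ≤
          m₂ * (Real.sqrt (∫ x in (0:ℝ)..1,
              (v x - ∫ ξ in (1 - x)..x, kKer ε c₁ x ξ * v ξ) ^ 2)
            + Real.sqrt (∫ x in (0:ℝ)..1,
              deriv (fun y => v y - ∫ ξ in (1 - y)..y, kKer ε c₁ y ξ * v ξ) x ^ 2)) := by
  exact H1_equivalence_of_contDiff (contDiff_kKer ε c₁)

end
end

section
/- Let d ∈ ℝ, ε > 0, and x, x₀, t ∈ ℝ. Then, with sin^{(k)} denoting the k-th derivative of the sine function (so sin^{(k)}(t) = sin(t + kπ/2)), the series identity (d/ε)·Σ_{k=0}^∞ ((x − x₀)^{2k+1}/(ε^k·(2k+1)!))·sin^{(k)}(t) = (d/(2√ε))·e^{(x−x₀)/√(2ε)}·sin(t + (x−x₀)/√(2ε) − π/4) − (d/(2√ε))·e^{(x₀−x)/√(2ε)}·sin(t + (x₀−x)/√(2ε) − π/4) holds, the series on the left converging absolutely. -/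
/-!
Write `a = (x - x₀) / √(2ε)` and `z = a (1 + i)`, so that `z² = (x - x₀)² i / ε`. Since
`sin⁽ᵏ⁾(t) = Im (iᵏ e^{it})` (`iteratedDeriv_sin_eq_im`), the `k`-th term of the series is the
imaginary part of `c z^{2k+1} / (2k+1)!`, where `c = √(2ε) / (1 + i) · e^{it}`. The power series of
`sinh` then gives the sum `Im (c sinh z)` (`hasSum_trajectory`), and expanding
`sinh z = (e^z - e^{-z}) / 2` together with `sin y - cos y = √2 sin (y - π/4)` yields the closed
form. A summable real series is absolutely summable.
-/

noncomputable section

open Complex in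
/-- The derivatives of sine and cosine at `t` are the imaginary and real parts of `iᵏ e^{it}`;
the two statements are proved together because differentiation swaps the functions. -/
lemma iteratedDeriv_sin_eq_im (t : ℝ) (k : ℕ) :
    iteratedDeriv k Real.sin t = (I ^ k * exp (t * I)).im ∧
      iteratedDeriv k Real.cos t = (I ^ k * exp (t * I)).re := by
  induction k with
  | zero => simp [exp_ofReal_mul_I_im, exp_ofReal_mul_I_re]
  | succ k ih =>
    have h : I ^ (k + 1) * exp (t * I) = I * (I ^ k * exp (t * I)) := by ring
    rw [h, I_mul_im, I_mul_re, Real.iteratedDeriv_add_one_sin, Real.iteratedDeriv_add_one_cos,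
      Pi.neg_apply, ih.1, ih.2]
    exact ⟨rfl, rfl⟩

open Complex in
/-- The series is the imaginary part of a multiple of the `sinh` series at
`u (1 + i) / √(2ε)`, a square root of `u² i / ε`. The factor `(1 - i) / 2` is `(1 + i)⁻¹`. -/
lemma hasSum_trajectory (ε u t : ℝ) (hε : 0 < ε) :
    HasSum (fun k : ℕ => u ^ (2 * k + 1) / (ε ^ k * (Nat.factorial (2 * k + 1) : ℝ)) *
        iteratedDeriv k Real.sin t)
      ((√(2 * ε) : ℂ) * ((1 - I) / 2) * exp (t * I) *
        sinh ((u / √(2 * ε) : ℝ) * (1 + I))).im := by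
  have hq : (√(2 * ε) : ℝ) ≠ 0 := (Real.sqrt_pos.2 (by positivity)).ne'
  have hqC : ((√(2 * ε) : ℝ) : ℂ) ≠ 0 := by exact_mod_cast hq
  have hεC : (ε : ℂ) ≠ 0 := by exact_mod_cast hε.ne'
  have hsq : ((√(2 * ε) : ℝ) : ℂ) ^ 2 = 2 * ε := by
    exact_mod_cast Real.sq_sqrt (by positivity : (0 : ℝ) ≤ 2 * ε)
  have h := hasSum_im ((hasSum_sinh ((u / √(2 * ε) : ℝ) * (1 + I))).mul_left
    ((√(2 * ε) : ℂ) * ((1 - I) / 2) * exp (t * I)))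
  refine h.congr_fun ?_
  intro k
  rw [(iteratedDeriv_sin_eq_im t k).1, ← im_ofReal_mul]
  congr 1
  have hz : (((u / √(2 * ε) : ℝ) : ℂ) * (1 + I)) ^ 2 = u ^ 2 * I / ε := by
    push_cast
    rw [mul_pow, div_pow, hsq]
    field_simp
    linear_combination (u : ℂ) ^ 2 * I_sq
  have hc : (√(2 * ε) : ℂ) * ((1 - I) / 2) * (((u / √(2 * ε) : ℝ) : ℂ) * (1 + I)) = u := by
    push_cast
    field_simp
    linear_combination -(u : ℂ) * I_sq
  have hp : (((u / √(2 * ε) : ℝ) : ℂ) * (1 + I)) ^ (2 * k + 1) =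
      (u ^ 2) ^ k * I ^ k / ε ^ k * (((u / √(2 * ε) : ℝ) : ℂ) * (1 + I)) := by
    rw [pow_succ, pow_mul, hz, div_pow, mul_pow]
  rw [hp, pow_succ u, pow_mul u]
  push_cast at hc ⊢
  linear_combination (-(((u : ℂ) ^ 2) ^ k * I ^ k / ε ^ k) * exp (t * I) /
    (Nat.factorial (2 * k + 1) : ℂ)) * hc

open Complex in
/-- The imaginary part of `√(2ε) (1 + i)⁻¹ e^{it} sinh (a (1 + i))`, in real terms. -/
lemma im_trajectory_sum (q a t : ℝ) :
    ((q : ℂ) * ((1 - I) / 2) * exp (t * I) * sinh ((a : ℝ) * (1 + I))).im =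
      q * (√2 / 4) * (Real.exp a * Real.sin (t + a - Real.pi / 4) -
        Real.exp (-a) * Real.sin (t + -a - Real.pi / 4)) := by
  have h2 : √2 * √2 = (2 : ℝ) := Real.mul_self_sqrt (by norm_num)
  have e : (q : ℂ) * ((1 - I) / 2) * exp (t * I) * sinh ((a : ℝ) * (1 + I)) =
      ((q / 4 : ℝ) : ℂ) * ((1 - I) * (((Real.exp a : ℝ) : ℂ) * exp ((t + a : ℝ) * I) -
        ((Real.exp (-a) : ℝ) : ℂ) * exp ((t + -a : ℝ) * I))) := by
    have e1 : exp (t * I) * exp (a * (1 + I)) =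
        ((Real.exp a : ℝ) : ℂ) * exp ((t + a : ℝ) * I) := by
      push_cast
      rw [← exp_add, ← exp_add]
      ring_nf
    have e2 : exp (t * I) * exp (-(a * (1 + I))) =
        ((Real.exp (-a) : ℝ) : ℂ) * exp ((t + -a : ℝ) * I) := by
      push_cast
      rw [← exp_add, ← exp_add]
      ring_nf
    rw [← e1, ← e2, sinh]
    push_cast
    ring
  rw [e, im_ofReal_mul, mul_im, sub_im, sub_re, sub_re, sub_im, re_ofReal_mul, re_ofReal_mul,
    im_ofReal_mul, im_ofReal_mul, exp_ofReal_mul_I_im, exp_ofReal_mul_I_re,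
    exp_ofReal_mul_I_im, exp_ofReal_mul_I_re, Real.sin_sub, Real.sin_sub, Real.cos_pi_div_four,
    Real.sin_pi_div_four]
  simp only [one_re, one_im, I_re, I_im]
  linear_combination (-(q / 8) * (Real.exp a * (Real.sin (t + a) - Real.cos (t + a)) -
    Real.exp (-a) * (Real.sin (t + -a) - Real.cos (t + -a)))) * h2

/-- Closed-form evaluation of the flatness-based reference-trajectory series
`(d/ε)·Σ_k ((x−x₀)^{2k+1}/(εᵏ(2k+1)!))·sin⁽ᵏ⁾(t)`. -/
theorem reference_trajectory_closed_form (d ε x x₀ t : ℝ) (hε : 0 < ε) :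
    Summable (fun k : ℕ =>
      |(x - x₀) ^ (2 * k + 1) / (ε ^ k * (Nat.factorial (2 * k + 1) : ℝ)) *
        iteratedDeriv k Real.sin t|) ∧
    d / ε * ∑' k : ℕ,
        (x - x₀) ^ (2 * k + 1) / (ε ^ k * (Nat.factorial (2 * k + 1) : ℝ)) *
          iteratedDeriv k Real.sin t =
      d / (2 * Real.sqrt ε) * Real.exp ((x - x₀) / Real.sqrt (2 * ε)) *
          Real.sin (t + (x - x₀) / Real.sqrt (2 * ε) - Real.pi / 4)
        - d / (2 * Real.sqrt ε) * Real.exp ((x₀ - x) / Real.sqrt (2 * ε)) *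
          Real.sin (t + (x₀ - x) / Real.sqrt (2 * ε) - Real.pi / 4) := by
  have h := hasSum_trajectory ε (x - x₀) t hε
  refine ⟨h.summable.abs, ?_⟩
  have hneg : (x₀ - x) / √(2 * ε) = -((x - x₀) / √(2 * ε)) := by ring
  have hcoef : d / ε * (√(2 * ε) * (√2 / 4)) = d / (2 * √ε) := by
    have hs : √ε ≠ 0 := (Real.sqrt_pos.2 hε).ne'
    have hss : √ε * √ε = ε := Real.mul_self_sqrt hε.le
    have h2 : √2 * √2 = (2 : ℝ) := Real.mul_self_sqrt (by norm_num)
    rw [Real.sqrt_mul (by norm_num : (0 : ℝ) ≤ 2)]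
    rw [div_mul_eq_mul_div, div_eq_div_iff hε.ne' (by positivity)]
    linear_combination (d * (√2 * √2) / 2) * hss + (d * ε / 2) * h2
  rw [h.tsum_eq, im_trajectory_sum, hneg, ← mul_assoc, hcoef]
  ring

end
end
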